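/- Let (M, (W_j), (S_i^j)) be an exact-repair regenerating code with parameters (n,k,d) and secondary parameters (B,α,β), where n ≥ d+1, and let p be an integer with 2 ≤ p ≤ k−2. Then both 3B ≤ 2B_p + B_{p+1} − β and 3B ≤ 2B_p + B_{p−1} − β. -/

import Mathlib

open Finset

/-- Shannon entropy (base 2) of a finitely-valued random variable `X` on a finite
probability space with mass function `P`. -/
noncomputable def entH {Ω S : Type*} [Fintype Ω] (P : Ω → ℝ) (X : Ω → S) : ℝ :=
  letI := Classical.decEq S
  ∑ s ∈ Finset.univ.image X,
    -((∑ ω ∈ Finset.univ.filter (fun ω => X ω = s), P ω) *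
       Real.logb 2 (∑ ω ∈ Finset.univ.filter (fun ω => X ω = s), P ω))

/-- Conditional entropy `H(X | Y) = H(X, Y) - H(Y)`. -/
noncomputable def condH {Ω S T : Type*} [Fintype Ω] (P : Ω → ℝ) (X : Ω → S) (Y : Ω → T) : ℝ :=
  entH P (fun ω => (X ω, Y ω)) - entH P Y

/-- The joint random variable `W_J = (W_j : j ∈ J)`. -/
def jointW {Ω : Type*} {n : ℕ} {σW : Fin n → Type*} (W : ∀ j, Ω → σW j)
    (J : Finset (Fin n)) : Ω → ∀ j : J, σW j.1 :=
  fun ω j => W j.1 ω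

/-- The joint random variable `(S_i^j : (i,j) ∈ E)` for a set `E` of pairs. -/
def jointS {Ω : Type*} {n : ℕ} {σS : Fin n → Fin n → Type*} (S : ∀ i j, Ω → σS i j)
    (E : Finset (Fin n × Fin n)) : Ω → ∀ e : E, σS e.1.1 e.1.2 :=
  fun ω e => S e.1.1 e.1.2 ω

/-- The joint random variable `S_I^j = (S_i^j : i ∈ I)`. -/
def jointSto {Ω : Type*} {n : ℕ} {σS : Fin n → Fin n → Type*} (S : ∀ i j, Ω → σS i j)
    (I : Finset (Fin n)) (j : Fin n) : Ω → ∀ i : I, σS i.1 j :=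
  fun ω i => S i.1 j ω

/-- An exact-repair regenerating code with parameters `(n,k,d)` (with `1 ≤ k ≤ d ≤ n-1`)
and secondary parameters `(B,α,β)`: the file `M`, the stored data `W j` on server `j`
(servers indexed by `Fin n`, server `j` of the paper being index `j-1`), and the helper
information `S i j` sent from server `i` to repair server `j`. -/
structure IsRegenCode {Ω : Type*} [Fintype Ω] (n k d : ℕ) (B α β : ℝ) (P : Ω → ℝ)
    {σM : Type*} {σW : Fin n → Type*} {σS : Fin n → Fin n → Type*}
    (M : Ω → σM) (W : ∀ j, Ω → σW j) (S : ∀ i j, Ω → σS i j) : Prop where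
  prob_nonneg : ∀ ω, 0 ≤ P ω
  prob_sum : ∑ ω, P ω = 1
  hk : 1 ≤ k
  hkd : k ≤ d
  hdn : d + 1 ≤ n
  hB : 0 ≤ B
  hα : 0 ≤ α
  hβ : 0 ≤ β
  hMB : entH P M = B
  hWα : ∀ j, entH P (W j) = α
  hWM : ∀ j, condH P (W j) M = 0
  hMW : ∀ J : Finset (Fin n), k ≤ J.card → condH P M (jointW W J) = 0
  hSβ : ∀ i j, i ≠ j → entH P (S i j) = β
  hSW : ∀ i j, i ≠ j → condH P (S i j) (W i) = 0
  hWS : ∀ (j : Fin n) (I : Finset (Fin n)), d ≤ I.card → j ∉ I →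
    condH P (W j) (jointSto S I j) = 0

/-- `B_q = qα + ((k-q)(k-q-1)/2)β + (d+1-k)(k-q)β`. -/
noncomputable def Bfun (k d q : ℕ) (α β : ℝ) : ℝ :=
  (q : ℝ) * α + (((k - q) * (k - q - 1) : ℕ) : ℝ) / 2 * β
    + (((d + 1 - k) * (k - q) : ℕ) : ℝ) * β

/-- The probability of the fibre of `X` through `ω`. -/
noncomputable def fiberMass {Ω S : Type*} [Fintype Ω] (P : Ω → ℝ) (X : Ω → S) (ω : Ω) : ℝ :=
  letI := Classical.decEq S
  ∑ a, if X a = X ω then P a else 0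

section Entropy

variable {Ω S T U V : Type*} [Fintype Ω] {P : Ω → ℝ}

lemma fiberMass_nonneg (hP : ∀ ω, 0 ≤ P ω) (X : Ω → S) (ω : Ω) : 0 ≤ fiberMass P X ω := by
  classical
  refine Finset.sum_nonneg fun a _ => ?_
  split_ifs
  exacts [hP a, le_rfl]

lemma le_fiberMass (hP : ∀ ω, 0 ≤ P ω) (X : Ω → S) (ω : Ω) : P ω ≤ fiberMass P X ω := by
  let := Classical.decEq S
  have h := Finset.single_le_sum (f := fun a => if X a = X ω then P a else 0)
    (fun a _ => by split_ifs; exacts [hP a, le_rfl]) (Finset.mem_univ ω)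
  simpa [fiberMass] using h

lemma fiberMass_congr {X : Ω → S} {ω ω' : Ω} (h : X ω = X ω') :
    fiberMass P X ω = fiberMass P X ω' := by
  rw [fiberMass, h, fiberMass]

lemma entH_eq_sum (P : Ω → ℝ) (X : Ω → S) :
    entH P X = ∑ ω, -(P ω * Real.logb 2 (fiberMass P X ω)) := by
  let := Classical.decEq S
  unfold entH
  rw [← Finset.sum_fiberwise_of_maps_to (s := Finset.univ) (t := Finset.univ.image X) (g := X)
    (fun ω _ => Finset.mem_image_of_mem X (Finset.mem_univ ω))]
  refine Finset.sum_congr rfl fun s _ => ?_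
  rw [Finset.sum_mul, ← Finset.sum_neg_distrib]
  refine Finset.sum_congr rfl fun ω hω => ?_
  rw [← (Finset.mem_filter.1 hω).2, fiberMass, Finset.sum_filter]

/-- The fibres of `v` inside the rectangle cut out by a fibre of `X` and a fibre of `Y` carry
total normalised mass at most one, when `X` and `Y` jointly determine `v`. -/
lemma sum_div_fiberMass_le_one [DecidableEq S] [DecidableEq T] (hP : ∀ ω, 0 ≤ P ω)
    {X : Ω → S} {Y : Ω → T} {v : Ω → V}
    (hv : ∀ ω ω', X ω = X ω' → Y ω = Y ω' → v ω = v ω') (s : S) (t : T) :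
    ∑ ω, (if s = X ω ∧ t = Y ω then P ω / fiberMass P v ω else 0) ≤ 1 := by
  by_cases hex : ∃ ω₀, s = X ω₀ ∧ t = Y ω₀
  · obtain ⟨ω₀, rfl, rfl⟩ := hex
    let := Classical.decEq V
    calc _ ≤ ∑ ω, (if v ω = v ω₀ then P ω else 0) / fiberMass P v ω₀ := by
          refine Finset.sum_le_sum fun ω _ => ?_
          have h0 : 0 ≤ (if v ω = v ω₀ then P ω else 0) / fiberMass P v ω₀ := by
            refine div_nonneg ?_ (fiberMass_nonneg hP v ω₀)
            split_ifs
            exacts [hP ω, le_rfl]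
          by_cases h : X ω₀ = X ω ∧ Y ω₀ = Y ω
          · have hvω := hv ω ω₀ h.1.symm h.2.symm
            rw [if_pos h, if_pos hvω, fiberMass_congr hvω]
          · rwa [if_neg h]
      _ = fiberMass P v ω₀ / fiberMass P v ω₀ := by rw [← Finset.sum_div, fiberMass]
      _ ≤ 1 := div_self_le_one _
  · refine le_of_eq_of_le (Finset.sum_eq_zero fun ω _ => ?_) zero_le_one
    exact if_neg fun h => hex ⟨ω, h⟩

lemma sum_mul_fiberMass_ratio_le (hP : ∀ ω, 0 ≤ P ω)
    {X : Ω → S} {Y : Ω → T} {v : Ω → V} {z : Ω → U}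
    (hv : ∀ ω ω', X ω = X ω' → Y ω = Y ω' → v ω = v ω')
    (hX : ∀ ω ω', X ω = X ω' → z ω = z ω') (hY : ∀ ω ω', Y ω = Y ω' → z ω = z ω') :
    ∑ ω, P ω * (fiberMass P X ω * fiberMass P Y ω / (fiberMass P v ω * fiberMass P z ω))
      ≤ ∑ ω, P ω := by
  let := Classical.decEq S
  let := Classical.decEq T
  let := Classical.decEq U
  calc _ = ∑ ω, ∑ a, ∑ b, P a * P b *
        (if X a = X ω ∧ Y b = Y ω then P ω / fiberMass P v ω / fiberMass P z ω else 0) := by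
        refine Finset.sum_congr rfl fun ω _ => ?_
        have : P ω * (fiberMass P X ω * fiberMass P Y ω / (fiberMass P v ω * fiberMass P z ω))
            = fiberMass P X ω * fiberMass P Y ω * (P ω / fiberMass P v ω / fiberMass P z ω) := by
          rw [div_div]; ring
        rw [this]
        conv_lhs => rw [fiberMass, fiberMass, Finset.sum_mul_sum, Finset.sum_mul]
        refine Finset.sum_congr rfl fun a _ => ?_
        rw [Finset.sum_mul]
        refine Finset.sum_congr rfl fun b _ => ?_
        by_cases h1 : X a = X ω <;> by_cases h2 : Y b = Y ω <;> simp [h1, h2]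
    _ = ∑ a, ∑ b, P a * P b *
        ∑ ω, (if X a = X ω ∧ Y b = Y ω then P ω / fiberMass P v ω / fiberMass P z ω else 0) := by
        rw [Finset.sum_comm]
        refine Finset.sum_congr rfl fun a _ => ?_
        rw [Finset.sum_comm]
        simp only [Finset.mul_sum]
    _ ≤ ∑ a, ∑ b, P a * P b * ((if z b = z a then 1 else 0) / fiberMass P z a) := by
        refine Finset.sum_le_sum fun a _ => Finset.sum_le_sum fun b _ =>
          mul_le_mul_of_nonneg_left ?_ (mul_nonneg (hP a) (hP b))
        by_cases hz : z b = z a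
        · rw [if_pos hz]
          calc _ = (∑ ω, if X a = X ω ∧ Y b = Y ω then P ω / fiberMass P v ω else 0)
                / fiberMass P z a := by
                rw [Finset.sum_div]
                refine Finset.sum_congr rfl fun ω _ => ?_
                split_ifs with h
                · rw [fiberMass_congr (hX a ω h.1)]
                · simp
            _ ≤ _ := div_le_div_of_nonneg_right (sum_div_fiberMass_le_one hP hv _ _)
                (fiberMass_nonneg hP z a)
        · rw [if_neg hz, zero_div]
          refine le_of_eq (Finset.sum_eq_zero fun ω _ => if_neg fun h => hz ?_)
          rw [hY b ω h.2, hX a ω h.1]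
    _ = ∑ a, P a * (fiberMass P z a / fiberMass P z a) := by
        refine Finset.sum_congr rfl fun a _ => ?_
        conv_rhs => rw [fiberMass, Finset.sum_div, Finset.mul_sum]
        refine Finset.sum_congr rfl fun b _ => ?_
        rw [fiberMass]
        split_ifs
        · ring
        · simp
    _ ≤ ∑ ω, P ω := Finset.sum_le_sum fun a _ =>
        mul_le_of_le_one_right (hP a) (div_self_le_one _)

/-- Submodularity of entropy: if `X` and `Y` jointly determine `v`, and each of them determines
`z`, then `H(v) + H(z) ≤ H(X) + H(Y)`. -/
theorem entH_submodular (hP : ∀ ω, 0 ≤ P ω)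
    {X : Ω → S} {Y : Ω → T} {v : Ω → V} {z : Ω → U}
    (hv : ∀ ω ω', X ω = X ω' → Y ω = Y ω' → v ω = v ω')
    (hX : ∀ ω ω', X ω = X ω' → z ω = z ω') (hY : ∀ ω ω', Y ω = Y ω' → z ω = z ω') :
    entH P v + entH P z ≤ entH P X + entH P Y := by
  have hlog2 : 0 < Real.log 2 := Real.log_pos one_lt_two
  have key : ∀ ω, P ω * Real.logb 2 (fiberMass P X ω) + P ω * Real.logb 2 (fiberMass P Y ω)
      - P ω * Real.logb 2 (fiberMass P v ω) - P ω * Real.logb 2 (fiberMass P z ω)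
      ≤ (P ω * (fiberMass P X ω * fiberMass P Y ω / (fiberMass P v ω * fiberMass P z ω)) - P ω)
        / Real.log 2 := by
    intro ω
    rcases (hP ω).eq_or_lt with h | h
    · simp [← h]
    have hx := h.trans_le (le_fiberMass hP X ω)
    have hy := h.trans_le (le_fiberMass hP Y ω)
    have hv' := h.trans_le (le_fiberMass hP v ω)
    have hz := h.trans_le (le_fiberMass hP z ω)
    have hr := Real.log_le_sub_one_of_pos (div_pos (mul_pos hx hy) (mul_pos hv' hz))
    rw [Real.log_div (mul_pos hx hy).ne' (mul_pos hv' hz).ne', Real.log_mul hx.ne' hy.ne',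
      Real.log_mul hv'.ne' hz.ne'] at hr
    rw [le_div_iff₀ hlog2]
    simp only [Real.logb]
    have := mul_le_mul_of_nonneg_left hr h.le
    field_simp at this ⊢
    linarith
  have hsum := Finset.sum_le_sum fun ω (_ : ω ∈ Finset.univ) => key ω
  rw [← Finset.sum_div, Finset.sum_sub_distrib _ P] at hsum
  have hle : (∑ ω, P ω * (fiberMass P X ω * fiberMass P Y ω /
      (fiberMass P v ω * fiberMass P z ω)) - ∑ ω, P ω) / Real.log 2 ≤ 0 :=
    div_nonpos_of_nonpos_of_nonneg (sub_nonpos.2 (sum_mul_fiberMass_ratio_le hP hv hX hY)) hlog2.le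
  have hlin := hsum.trans hle
  simp only [Finset.sum_sub_distrib, Finset.sum_add_distrib] at hlin
  simp only [entH_eq_sum, Finset.sum_neg_distrib]
  linarith

lemma entH_mono (hP : ∀ ω, 0 ≤ P ω) {X : Ω → S} {Y : Ω → T}
    (h : ∀ ω ω', X ω = X ω' → Y ω = Y ω') : entH P Y ≤ entH P X := by
  have := entH_submodular hP (X := X) (Y := X) (v := X) (z := Y) (fun _ _ h _ => h) h h
  linarith

end Entropy

/-- The properties of the joint entropies `g J E = H(W_J, S_E)` of an exact-repair regenerating
code that enter the outer bounds. -/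
structure IsRepairPolymatroid (n k d : ℕ) (B α β : ℝ)
    (g : Finset (Fin n) → Finset (Fin n × Fin n) → ℝ) : Prop where
  hkd : k ≤ d
  hdn : d + 1 ≤ n
  empty : g ∅ ∅ = 0
  submodular : ∀ {J₁ J₂ J J' E₁ E₂ E E'}, J ⊆ J₁ ∪ J₂ → E ⊆ E₁ ∪ E₂ → J' ⊆ J₁ ∩ J₂ →
    E' ⊆ E₁ ∩ E₂ → g J E + g J' E' ≤ g J₁ E₁ + g J₂ E₂
  node_le : ∀ j, g {j} ∅ ≤ α
  helper_le : ∀ i j, i ≠ j → g ∅ {(i, j)} ≤ β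
  helper_closed : ∀ {i j J E}, i ∈ J → i ≠ j → g J (insert (i, j) E) ≤ g J E
  repair : ∀ {j} {I J : Finset (Fin n)} {E}, d ≤ I.card → j ∉ I → (∀ i ∈ I, (i, j) ∈ E) →
    g (insert j J) E ≤ g J E
  decode : ∀ {J : Finset (Fin n)} {E}, k ≤ J.card → B ≤ g J E

lemma IsRegenCode.isRepairPolymatroid {Ω : Type*} [Fintype Ω] {n k d : ℕ} {B α β : ℝ} {P : Ω → ℝ}
    {σM : Type*} {σW : Fin n → Type*} {σS : Fin n → Fin n → Type*}
    {M : Ω → σM} {W : ∀ j, Ω → σW j} {S : ∀ i j, Ω → σS i j}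
    (hcode : IsRegenCode n k d B α β P M W S) :
    IsRepairPolymatroid n k d B α β
      (fun J E => entH P (fun ω => (jointW W J ω, jointS S E ω))) := by
  have hP := hcode.prob_nonneg
  have hker : ∀ {J : Finset (Fin n)} {E : Finset (Fin n × Fin n)} {ω ω' : Ω},
      ((jointW W J ω, jointS S E ω) = (jointW W J ω', jointS S E ω')) ↔
        (∀ j ∈ J, W j ω = W j ω') ∧ ∀ e ∈ E, S e.1 e.2 ω = S e.1 e.2 ω' := by
    intro J E ω ω'
    simp only [Prod.mk.injEq, funext_iff, Subtype.forall, jointW, jointS]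
  have hmono : ∀ {J J' : Finset (Fin n)} {E E' : Finset (Fin n × Fin n)}, J ⊆ J' → E ⊆ E' →
      entH P (fun ω => (jointW W J ω, jointS S E ω)) ≤
        entH P (fun ω => (jointW W J' ω, jointS S E' ω)) := by
    intro J J' E E' hJ hE
    refine entH_mono hP fun ω ω' h => ?_
    rw [hker] at h ⊢
    exact ⟨fun j hj => h.1 j (hJ hj), fun e he => h.2 e (hE he)⟩
  have h0 : entH P (fun ω => (jointW W ∅ ω, jointS S ∅ ω)) = 0 := by
    have hmass : ∀ ω, fiberMass P (fun ω => (jointW W ∅ ω, jointS S ∅ ω)) ω = 1 := fun ω => by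
      rw [← hcode.prob_sum, fiberMass]
      refine Finset.sum_congr rfl fun a _ => if_pos ?_
      exact Prod.ext (funext fun j => absurd j.2 (Finset.notMem_empty _))
        (funext fun e => absurd e.2 (Finset.notMem_empty _))
    simp [entH_eq_sum, hmass]
  refine ⟨hcode.hkd, hcode.hdn, h0, ?_, ?_, ?_, ?_, ?_, ?_⟩
  · intro J₁ J₂ J J' E₁ E₂ E E' hJ hE hJ' hE'
    refine entH_submodular hP (fun ω ω' h₁ h₂ => ?_) (fun ω ω' h => ?_) (fun ω ω' h => ?_)
    · rw [hker] at h₁ h₂ ⊢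
      exact ⟨fun j hj => (Finset.mem_union.1 (hJ hj)).elim (h₁.1 j) (h₂.1 j),
        fun e he => (Finset.mem_union.1 (hE he)).elim (h₁.2 e) (h₂.2 e)⟩
    · rw [hker] at h ⊢
      exact ⟨fun j hj => h.1 j (Finset.mem_inter.1 (hJ' hj)).1,
        fun e he => h.2 e (Finset.mem_inter.1 (hE' he)).1⟩
    · rw [hker] at h ⊢
      exact ⟨fun j hj => h.1 j (Finset.mem_inter.1 (hJ' hj)).2,
        fun e he => h.2 e (Finset.mem_inter.1 (hE' he)).2⟩
  · intro j
    rw [← hcode.hWα j]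
    refine entH_mono hP fun ω ω' h => ?_
    rw [hker]
    simpa using h
  · intro i j hij
    rw [← hcode.hSβ i j hij]
    refine entH_mono hP fun ω ω' h => ?_
    rw [hker]
    simpa using h
  · intro i j J E hi hij
    have h0 := hcode.hSW i j hij
    rw [condH] at h0
    have := entH_submodular hP (X := fun ω => (jointW W J ω, jointS S E ω))
      (Y := fun ω => (S i j ω, W i ω)) (z := W i)
      (v := fun ω => (jointW W J ω, jointS S (insert (i, j) E) ω)) ?_ ?_ ?_
    · linarith
    · intro ω ω' h₁ h₂
      rw [hker] at h₁ ⊢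
      simp only [Prod.mk.injEq] at h₂
      exact ⟨h₁.1, by simpa using ⟨h₂.1, fun a b => h₁.2 (a, b)⟩⟩
    · intro ω ω' h
      rw [hker] at h
      exact h.1 i hi
    · intro ω ω' h
      exact (Prod.mk.inj h).2
  · intro j I J E hI hj hE
    have h0 := hcode.hWS j I hI hj
    rw [condH] at h0
    have := entH_submodular hP (X := fun ω => (jointW W J ω, jointS S E ω))
      (Y := fun ω => (W j ω, jointSto S I j ω)) (z := jointSto S I j)
      (v := fun ω => (jointW W (insert j J) ω, jointS S E ω)) ?_ ?_ ?_
    · linarith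
    · intro ω ω' h₁ h₂
      rw [hker] at h₁ ⊢
      simp only [Prod.mk.injEq] at h₂
      exact ⟨by simpa using ⟨h₂.1, h₁.1⟩, h₁.2⟩
    · intro ω ω' h
      rw [hker] at h
      funext i
      exact h.2 (i.1, j) (hE i.1 i.2)
    · intro ω ω' h
      exact (Prod.mk.inj h).2
  · intro J E hJ
    have h0 := hcode.hMW J hJ
    rw [condH] at h0
    have h1 : entH P M ≤ entH P (fun ω => (M ω, jointW W J ω)) :=
      entH_mono hP fun ω ω' h => (Prod.mk.inj h).1
    have h2 : entH P (jointW W J) ≤ entH P (fun ω => (jointW W J ω, jointS S E ω)) :=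
      entH_mono hP fun ω ω' h => (Prod.mk.inj h).1
    have := hcode.hMB
    linarith

/-- The number of helper messages that a decoder holding the data of `q` servers still needs,
so that `B_q = qα + tβ` for `t = helperCount k d q`. -/
noncomputable def helperCount (k d q : ℕ) : ℝ :=
  ((k : ℝ) - q) * (k - q - 1) / 2 + ((d : ℝ) + 1 - k) * (k - q)

lemma helperCount_succ (k d q : ℕ) :
    helperCount k d q = helperCount k d (q + 1) + ((d : ℝ) - q) := by
  simp only [helperCount]
  push_cast
  ring

lemma Bfun_eq {k d q : ℕ} (hq : q < k) (hkd : k ≤ d) (α β : ℝ) :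
    Bfun k d q α β = q * α + helperCount k d q * β := by
  rw [Bfun, helperCount, Nat.cast_mul, Nat.cast_mul, Nat.cast_sub (by omega : 1 ≤ k - q),
    Nat.cast_sub hq.le, Nat.cast_sub (by omega : k ≤ d + 1)]
  push_cast
  ring

namespace IsRepairPolymatroid

variable {n k d : ℕ} {B α β : ℝ} {g : Finset (Fin n) → Finset (Fin n × Fin n) → ℝ}

lemma mono (hg : IsRepairPolymatroid n k d B α β g) {J J' : Finset (Fin n)}
    {E E' : Finset (Fin n × Fin n)} (hJ : J ⊆ J') (hE : E ⊆ E') : g J E ≤ g J' E' := by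
  have := hg.submodular (J₁ := J') (J₂ := J') (J := J') (J' := J) (E₁ := E') (E₂ := E')
    (E := E') (E' := E) (by simp) (by simp) (by simpa using hJ) (by simpa using hE)
  linarith

lemma insert_node_le (hg : IsRepairPolymatroid n k d B α β g) (j : Fin n) (J : Finset (Fin n))
    (E : Finset (Fin n × Fin n)) : g (insert j J) E ≤ g J E + α := by
  have := hg.submodular (J₁ := {j}) (J₂ := J) (J := insert j J) (J' := ∅) (E₁ := ∅) (E₂ := E)
    (E := E) (E' := ∅) (by rw [Finset.insert_eq]) (by simp) (by simp) (by simp)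
  have := hg.node_le j
  have := hg.empty
  linarith

lemma insert_helper_le (hg : IsRepairPolymatroid n k d B α β g) {i j : Fin n} (hij : i ≠ j)
    (J : Finset (Fin n)) (E : Finset (Fin n × Fin n)) :
    g J (insert (i, j) E) ≤ g J E + β := by
  have := hg.submodular (J₁ := ∅) (J₂ := J) (J := J) (J' := ∅) (E₁ := {(i, j)}) (E₂ := E)
    (E := insert (i, j) E) (E' := ∅) (by simp) (by rw [Finset.insert_eq]) (by simp) (by simp)
  have := hg.helper_le i j hij
  have := hg.empty
  linarith

lemma nodes_le (hg : IsRepairPolymatroid n k d B α β g) (J : Finset (Fin n)) :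
    g J ∅ ≤ J.card * α := by
  induction J using Finset.induction_on with
  | empty => simp [hg.empty]
  | insert j J hj ih =>
    rw [Finset.card_insert_of_notMem hj]
    have := hg.insert_node_le j J ∅
    push_cast
    linarith

/-- Helper messages sent by servers whose data is known, or for a known set of helpers, reduce the
number of further messages needed to repair the server `v`. -/
lemma repair_le (hg : IsRepairPolymatroid n k d B α β g) {J K : Finset (Fin n)} {v : Fin n}
    {E : Finset (Fin n × Fin n)} (hJK : Disjoint J K) (hvJ : v ∉ J) (hvK : v ∉ K)
    (hK : ∀ i ∈ K, (i, v) ∈ E) (hcard : J.card + K.card ≤ d) :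
    g (insert v J) E ≤ g J E + ((d : ℝ) - J.card - K.card) * β := by
  have hfree : d - (J.card + K.card) ≤ (insert v (J ∪ K))ᶜ.card := by
    rw [Finset.card_compl, Fintype.card_fin, Finset.card_insert_of_notMem (by simp [hvJ, hvK]),
      Finset.card_union_of_disjoint hJK]
    have := hg.hdn
    omega
  obtain ⟨I, hI, hIcard⟩ := Finset.exists_subset_card_eq hfree
  have hIv : ∀ i ∈ I, i ≠ v ∧ i ∉ J ∧ i ∉ K := fun i hi => by
    have := hI hi
    simp only [Finset.mem_compl, Finset.mem_insert, Finset.mem_union, not_or] at this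
    exact this
  have hadd : ∀ I' : Finset (Fin n), v ∉ I' →
      g J (E ∪ I'.image (fun i => (i, v))) ≤ g J E + I'.card * β := by
    intro I'
    induction I' using Finset.induction_on with
    | empty => simp
    | insert i I' hi ih =>
      intro hv
      simp only [Finset.mem_insert, not_or] at hv
      have h1 := hg.insert_helper_le (Ne.symm hv.1) J (E ∪ I'.image (fun i => (i, v)))
      have h2 := ih hv.2
      rw [Finset.image_insert, Finset.union_insert, Finset.card_insert_of_notMem hi]
      push_cast
      linarith
  have hknown : ∀ J' ⊆ J, ∀ E' : Finset (Fin n × Fin n),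
      g J (E' ∪ J'.image (fun i => (i, v))) ≤ g J E' := by
    intro J'
    induction J' using Finset.induction_on with
    | empty => simp
    | insert i J' hi ih =>
      intro hJ' E'
      rw [Finset.insert_subset_iff] at hJ'
      rw [Finset.image_insert, Finset.union_insert]
      exact (hg.helper_closed hJ'.1 (by rintro rfl; exact hvJ hJ'.1)).trans (ih hJ'.2 E')
  have h1 := hadd I fun h => (hIv v h).1 rfl
  have h2 := hknown J subset_rfl (E ∪ I.image (fun i => (i, v)))
  have hcardU : d ≤ (J ∪ K ∪ I).card := by
    rw [Finset.card_union_of_disjoint, Finset.card_union_of_disjoint hJK, hIcard]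
    · omega
    · rw [Finset.disjoint_right]
      intro i hi
      simpa using (hIv i hi).2
  have h3 : g (insert v J) (E ∪ I.image (fun i => (i, v)) ∪ J.image (fun i => (i, v))) ≤ _ :=
    hg.repair hcardU
      (by simpa [hvJ, hvK] using fun h => (hIv v h).1 rfl)
      (by
        intro i hi
        simp only [Finset.mem_union] at hi
        rcases hi with (hi | hi) | hi
        · exact Finset.mem_union_right _ (Finset.mem_image_of_mem _ hi)
        · exact Finset.mem_union_left _ (Finset.mem_union_left _ (hK i hi))
        · exact Finset.mem_union_left _ (Finset.mem_union_right _ (Finset.mem_image_of_mem _ hi)))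
  have h4 : g (insert v J) E ≤ g (insert v J) _ :=
    hg.mono subset_rfl ((Finset.subset_union_left (s₂ := I.image (fun i => (i, v)))).trans
      (Finset.subset_union_left (s₂ := J.image (fun i => (i, v)))))
  rw [hIcard, Nat.cast_sub hcard] at h1
  push_cast at h1
  linarith

/-- A single known helper message to `v` saves one message in the repair of `v`. -/
lemma repair_le_of_mem (hg : IsRepairPolymatroid n k d B α β g) {J : Finset (Fin n)}
    {u v : Fin n} {E : Finset (Fin n × Fin n)} (hu : u ∉ J) (hv : v ∉ J) (huv : u ≠ v)
    (hE : (u, v) ∈ E) {q : ℕ} (hq : J.card = q) (hcard : q + 1 ≤ d) :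
    g (insert v J) E ≤ g J E + ((d : ℝ) - q - 1) * β := by
  have := hg.repair_le (J := J) (K := {u}) (v := v) (E := E) (by simpa using hu) hv
    (by simpa using huv.symm) (by simpa using hE) (by simpa [hq] using hcard)
  simpa [hq] using this

/-- Repairing `v` from the data of `J` and further messages, one of which is sent by `u`. -/
lemma repair_with_helper_le (hg : IsRepairPolymatroid n k d B α β g) {J : Finset (Fin n)}
    {u v : Fin n} (hu : u ∉ J) (hv : v ∉ J) (huv : u ≠ v) {q : ℕ} (hq : J.card = q)
    (hcard : q + 1 ≤ d) :
    g (insert v J) {(u, v)} ≤ g J ∅ + ((d : ℝ) - q) * β := by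
  have h1 := hg.repair_le_of_mem (E := {(u, v)}) hu hv huv (by simp) hq hcard
  have h2 := hg.insert_helper_le huv J ∅
  simp only [insert_empty_eq] at h2
  linarith

lemma decode_le (hg : IsRepairPolymatroid n k d B α β g) {J : Finset (Fin n)}
    {E : Finset (Fin n × Fin n)} {q : ℕ} (hq : J.card = q) (hqk : q ≤ k) :
    B ≤ g J E + helperCount k d q * β := by
  obtain ⟨m, rfl⟩ := Nat.exists_eq_add_of_le hqk
  have hkd := hg.hkd
  have hdn := hg.hdn
  induction m generalizing J q with
  | zero =>
    have := hg.decode (J := J) (E := E) (by omega)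
    simpa [helperCount] using this
  | succ m ih =>
    obtain ⟨v, hv⟩ : ∃ v, v ∉ J := by
      by_contra! h
      have := Finset.card_fin n ▸ congrArg Finset.card (Finset.eq_univ_of_forall h)
      omega
    have h1 := hg.repair_le (J := J) (K := ∅) (v := v) (E := E) (by simp) hv (by simp) (by simp)
      (by simp; omega)
    have hc : (insert v J).card = q + 1 := by rw [Finset.card_insert_of_notMem hv, hq]
    have e : q + (m + 1) = q + 1 + m := by ring
    rw [e] at hg hkd ⊢
    have h2 := ih hc hg (by omega) hkd
    rw [helperCount_succ]
    simp only [hq, Finset.card_empty, Nat.cast_zero, sub_zero] at h1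
    linarith

/-- The bound `3B ≤ 2B_p + B_{p+1} - β`, for servers `Q` with `|Q| = p - 1` and four more. -/
lemma three_mul_le_succ (hg : IsRepairPolymatroid n k d B α β g)
    {Q : Finset (Fin n)} {a b c e : Fin n} (ha : a ∉ Q) (hb : b ∉ insert a Q)
    (hc : c ∉ insert b (insert a Q)) (he : e ∉ insert c (insert b (insert a Q)))
    {q : ℕ} (hQ : Q.card = q) (hqk : q + 3 ≤ k) :
    3 * B ≤ (3 * q + 4) * α + (2 * helperCount k d (q + 1) + helperCount k d (q + 2) - 1) * β := by
  have hkd := hg.hkd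
  simp only [Finset.mem_insert, not_or] at hb hc he
  obtain ⟨hba, hb⟩ := hb
  obtain ⟨hcb, hca, hc⟩ := hc
  obtain ⟨hec, heb, hea, he⟩ := he
  have card1 : ∀ x, x ∉ Q → (insert x Q).card = q + 1 := fun x hx => by
    rw [Finset.card_insert_of_notMem hx, hQ]
  have card2 : ∀ x y, x ∉ insert y Q → y ∉ Q → (insert x (insert y Q)).card = q + 2 :=
    fun x y hx hy => by rw [Finset.card_insert_of_notMem hx, card1 y hy]
  have card3 : ∀ x y z, x ∉ insert y (insert z Q) → y ∉ insert z Q → z ∉ Q →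
      (insert x (insert y (insert z Q))).card = q + 3 :=
    fun x y z hx hy hz => by rw [Finset.card_insert_of_notMem hx, card2 y z hy hz]
  have nQ := hg.nodes_le Q
  rw [hQ] at nQ
  have nodeQ : ∀ x, g (insert x Q) ∅ ≤ (q + 1) * α := fun x => by
    linarith [hg.insert_node_le x Q ∅]
  have u1 := hg.repair_with_helper_le (J := insert a Q) (u := c) (v := b) (by simp [*])
    (by simp [*]) hcb (card1 a ha) (by omega)
  have u2 := hg.repair_with_helper_le (J := insert b Q) (u := c) (v := a) (by simp [*])
    (by simp [*, Ne.symm hba]) hca (card1 b hb) (by omega)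
  rw [Finset.insert_comm a b] at u2
  have s1 := hg.submodular (J₁ := insert b (insert a Q)) (J₂ := insert b (insert a Q))
    (J := insert b (insert a Q)) (J' := insert b (insert a Q)) (E₁ := {(c, b)}) (E₂ := {(c, a)})
    (E := {(c, b), (c, a)}) (E' := ∅) (by simp) (by simp) (by simp) (by simp)
  have s2 := hg.submodular (J₁ := insert b (insert a Q)) (J₂ := insert c Q)
    (J := insert c (insert b (insert a Q))) (J' := Q) (E₁ := {(c, b), (c, a)})
    (E₂ := {(c, b), (c, a)}) (E := ∅) (E' := {(c, b), (c, a)}) (by grind) (by simp) (by grind)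
    (by simp)
  have z1 := hg.helper_closed (J := insert c Q) (E := {(c, a)}) (Finset.mem_insert_self c Q) hcb
  have z2 := hg.helper_closed (J := insert c Q) (E := ∅) (Finset.mem_insert_self c Q) hca
  simp only [insert_empty_eq] at z2
  have d1 := hg.decode_le (E := ∅) (card2 b a (by simp [*]) ha) (by omega)
  have d2 := hg.decode_le (E := ∅) (card3 c b a (by simp [*]) (by simp [*]) ha) hqk
  have r0 := hg.insert_node_le e Q {(c, b), (c, a)}
  have r1 := hg.repair_le_of_mem (J := insert e Q) (E := {(c, b), (c, a)}) (u := c) (v := a)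
    (by simp [*, Ne.symm hec]) (by simp [*, Ne.symm hea]) hca (by simp) (card1 e he) (by omega)
  have r2 := hg.repair_le_of_mem (J := insert a (insert e Q)) (E := {(c, b), (c, a)}) (u := c)
    (v := b) (by simp [*, Ne.symm hec]) (by simp [*, Ne.symm heb]) hcb (by simp)
    (card2 a e (by simp [*, Ne.symm hea]) he) (by omega)
  have r3 := hg.decode_le (E := {(c, b), (c, a)}) (card3 b a e (by simp [*, Ne.symm heb])
    (by simp [*, Ne.symm hea]) he) hqk
  have na := nodeQ a
  have nb := nodeQ b
  have nc := nodeQ c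
  have t1 := helperCount_succ k d (q + 1)
  have t2 := helperCount_succ k d (q + 2)
  push_cast at *
  rw [t1, t2]
  rw [t2] at d1
  linarith

/-- The bound `3B ≤ 2B_p + B_{p-1} - β`, for servers `Q` with `|Q| = p - 2` and five more. -/
lemma three_mul_le_pred (hg : IsRepairPolymatroid n k d B α β g)
    {Q : Finset (Fin n)} {a b c e f : Fin n} (ha : a ∉ Q) (hb : b ∉ insert a Q)
    (hc : c ∉ insert b (insert a Q)) (he : e ∉ insert c (insert b (insert a Q)))
    (hf : f ∉ insert e (insert c (insert b (insert a Q))))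
    {q : ℕ} (hQ : Q.card = q) (hqk : q + 4 ≤ k) :
    3 * B ≤ (3 * q + 5) * α + (2 * helperCount k d (q + 2) + helperCount k d (q + 1) - 1) * β := by
  have hkd := hg.hkd
  simp only [Finset.mem_insert, not_or] at hb hc he hf
  obtain ⟨hba, hb⟩ := hb
  obtain ⟨hcb, hca, hc⟩ := hc
  obtain ⟨hec, heb, hea, he⟩ := he
  obtain ⟨hfe, hfc, hfb, hfa, hf⟩ := hf
  have card1 : ∀ x, x ∉ Q → (insert x Q).card = q + 1 := fun x hx => by
    rw [Finset.card_insert_of_notMem hx, hQ]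
  have card2 : ∀ x y, x ∉ insert y Q → y ∉ Q → (insert x (insert y Q)).card = q + 2 :=
    fun x y hx hy => by rw [Finset.card_insert_of_notMem hx, card1 y hy]
  have card3 : ∀ x y z, x ∉ insert y (insert z Q) → y ∉ insert z Q → z ∉ Q →
      (insert x (insert y (insert z Q))).card = q + 3 :=
    fun x y z hx hy hz => by rw [Finset.card_insert_of_notMem hx, card2 y z hy hz]
  have card4 : ∀ x y z w, x ∉ insert y (insert z (insert w Q)) → y ∉ insert z (insert w Q) →
      z ∉ insert w Q → w ∉ Q → (insert x (insert y (insert z (insert w Q)))).card = q + 4 :=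
    fun x y z w hx hy hz hw => by rw [Finset.card_insert_of_notMem hx, card3 y z w hy hz hw]
  have nQ := hg.nodes_le Q
  rw [hQ] at nQ
  have nb := hg.insert_node_le b Q ∅
  have ne := hg.insert_node_le e Q ∅
  have na := hg.insert_node_le a Q ∅
  have nac := hg.insert_node_le c (insert a Q) ∅
  have u1 := hg.repair_with_helper_le (J := insert c (insert a Q)) (u := e) (v := b)
    (by simp [*]) (by simp [*, Ne.symm hcb]) heb (card2 c a (by simp [*]) ha) (by omega)
  rw [Finset.insert_comm b c] at u1
  have u2 := hg.repair_with_helper_le (J := insert b (insert a Q)) (u := e) (v := c)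
    (by simp [*]) (by simp [*]) hec (card2 b a (by simp [*]) ha) (by omega)
  have u3 := hg.repair_with_helper_le (J := insert b Q) (u := e) (v := a)
    (by simp [*]) (by simp [*, Ne.symm hba]) hea (card1 b hb) (by omega)
  rw [Finset.insert_comm a b] at u3
  have s1 := hg.submodular (J₁ := insert c (insert b (insert a Q)))
    (J₂ := insert c (insert b (insert a Q))) (J := insert c (insert b (insert a Q)))
    (J' := insert c (insert b (insert a Q))) (E₁ := {(e, b)}) (E₂ := {(e, c)})
    (E := {(e, b), (e, c)}) (E' := ∅) (by simp) (by simp) (by simp) (by simp)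
  have s2 := hg.submodular (J₁ := insert c (insert b (insert a Q)))
    (J₂ := insert b (insert a Q)) (J := insert c (insert b (insert a Q)))
    (J' := insert b (insert a Q)) (E₁ := {(e, b), (e, c)}) (E₂ := {(e, a)})
    (E := {(e, a), (e, b), (e, c)}) (E' := ∅) (by simp) (by grind)
    (by grind) (by simp)
  have s3 := hg.submodular (J₁ := insert c (insert b (insert a Q)))
    (J₂ := insert e Q) (J := insert e (insert c (insert b (insert a Q))))
    (J' := Q) (E₁ := {(e, a), (e, b), (e, c)}) (E₂ := {(e, a), (e, b), (e, c)})
    (E := ∅) (E' := {(e, a), (e, b), (e, c)}) (by grind) (by simp)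
    (by grind) (by simp)
  have z1 := hg.helper_closed (J := insert e Q) (E := {(e, b), (e, c)})
    (Finset.mem_insert_self e Q) hea
  have z2 := hg.helper_closed (J := insert e Q) (E := {(e, c)}) (Finset.mem_insert_self e Q) heb
  have z3 := hg.helper_closed (J := insert e Q) (E := ∅) (Finset.mem_insert_self e Q) hec
  simp only [insert_empty_eq] at z3
  have d1 := hg.decode_le (E := ∅) (card3 c b a (by simp [*]) (by simp [*]) ha) (by omega)
  have d2 := hg.decode_le (E := ∅) (card4 e c b a (by simp [*]) (by simp [*]) (by simp [*]) ha) hqk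
  have r0 := hg.insert_node_le f Q {(e, a), (e, b), (e, c)}
  have r1 := hg.repair_le_of_mem (J := insert f Q) (E := {(e, a), (e, b), (e, c)}) (u := e)
    (v := a) (by simp [*, Ne.symm hfe]) (by simp [*, Ne.symm hfa]) hea (by simp) (card1 f hf)
    (by omega)
  have r2 := hg.repair_le_of_mem (J := insert a (insert f Q)) (E := {(e, a), (e, b), (e, c)})
    (u := e) (v := b) (by simp [*, Ne.symm hfe]) (by simp [*, Ne.symm hfb]) heb (by simp)
    (card2 a f (by simp [*, Ne.symm hfa]) hf) (by omega)
  have r3 := hg.repair_le_of_mem (J := insert b (insert a (insert f Q)))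
    (E := {(e, a), (e, b), (e, c)}) (u := e) (v := c) (by simp [*, Ne.symm hfe])
    (by simp [*, Ne.symm hfc]) hec (by simp)
    (card3 b a f (by simp [*, Ne.symm hfb]) (by simp [*, Ne.symm hfa]) hf) (by omega)
  have r4 := hg.decode_le (E := {(e, a), (e, b), (e, c)}) (card4 c b a f
    (by simp [*, Ne.symm hfc]) (by simp [*, Ne.symm hfb]) (by simp [*, Ne.symm hfa]) hf) hqk
  have t1 := helperCount_succ k d (q + 1)
  have t2 := helperCount_succ k d (q + 2)
  have t3 := helperCount_succ k d (q + 3)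
  push_cast at *
  rw [t1, t2, t3]
  rw [t3] at d1
  linarith

end IsRepairPolymatroid

lemma exists_notMem_of_card_lt {n : ℕ} {J : Finset (Fin n)} (h : J.card < n) : ∃ v, v ∉ J := by
  by_contra! hall
  rw [Finset.eq_univ_of_forall hall, Finset.card_fin] at h
  exact h.false

/-- for `2 ≤ p ≤ k - 2`, both `3B ≤ 2B_p + B_{p+1} - β` and
`3B ≤ 2B_p + B_{p-1} - β`. -/
theorem stmt_6 {Ω : Type*} [Fintype Ω] {n k d : ℕ} {B α β : ℝ} {P : Ω → ℝ}
    {σM : Type*} {σW : Fin n → Type*} {σS : Fin n → Fin n → Type*}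
    {M : Ω → σM} {W : ∀ j, Ω → σW j} {S : ∀ i j, Ω → σS i j}
    (hcode : IsRegenCode n k d B α β P M W S)
    (p : ℕ) (hp2 : 2 ≤ p) (hpk : p + 2 ≤ k) :
    3 * B ≤ 2 * Bfun k d p α β + Bfun k d (p + 1) α β - β ∧
    3 * B ≤ 2 * Bfun k d p α β + Bfun k d (p - 1) α β - β := by
  have hg := hcode.isRepairPolymatroid
  have hkd := hcode.hkd
  have hdn := hcode.hdn
  obtain ⟨q, rfl⟩ := Nat.exists_eq_add_of_le' hp2
  obtain ⟨Q, -, hQ⟩ := Finset.exists_subset_card_eq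
    (s := (Finset.univ : Finset (Fin n))) (n := q) (by rw [Finset.card_fin]; omega)
  obtain ⟨a, ha⟩ := exists_notMem_of_card_lt (J := Q) (by omega)
  have ca := Finset.card_insert_of_notMem ha
  obtain ⟨b, hb⟩ := exists_notMem_of_card_lt (J := insert a Q) (by omega)
  have cb := Finset.card_insert_of_notMem hb
  obtain ⟨c, hc⟩ := exists_notMem_of_card_lt (J := insert b (insert a Q)) (by omega)
  have cc := Finset.card_insert_of_notMem hc
  obtain ⟨e, he⟩ := exists_notMem_of_card_lt (J := insert c (insert b (insert a Q))) (by omega)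
  have ce := Finset.card_insert_of_notMem he
  obtain ⟨f, hf⟩ := exists_notMem_of_card_lt
    (J := insert e (insert c (insert b (insert a Q)))) (by omega)
  have h1 := hg.three_mul_le_succ hb hc he hf (ca.trans (by rw [hQ])) (by omega)
  have h2 := hg.three_mul_le_pred ha hb hc he hf hQ (by omega)
  have e1 : q + 2 - 1 = q + 1 := by omega
  rw [e1, Bfun_eq (by omega) hkd, Bfun_eq (by omega) hkd, Bfun_eq (by omega) hkd]
  push_cast at *
  constructor <;> linarith
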